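/- Let Z be a Peano continuum which admits no essential map to the circle, let A be a closed subset of Z, and let c, d ∈ Z \ A. If c and d are separated by A (i.e., they lie in different components of Z \ A), then c and d are separated by some connected component of A. -/

import Mathlib

/-!
Write `C(F, x)` for the component of `x` in `F`. If `U` and `V` are open and cover a space with no
essential map to the circle, then `C(U ∩ V, c) = C(U, c) ∩ C(V, c)`. Indeed, the frontier of
`W = C(U ∩ V, c)` misses `U ∩ V`, so Urysohn's lemma writes the indicator of `W` as `u - v`, with
`u` continuous on `U` and `v` continuous on `V`. The circle-valued functions `exp (2πiu)` and
`exp (2πiv)` agree, hence form a continuous map, which is `exp (ig)` for some continuous `g`. On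
connected subsets of `U`, resp. `V`, the difference of `g` and `2πu`, resp. `2πv`, is constant. So
if `d` lies in both `C(U, c)` and `C(V, c)`, then `u - v` takes the same value at `c` and `d`, that
is, `d ∈ W`.

For complements of closed sets: if a union of two disjoint closed sets separates `c` from `d`, then
so does one of the two. By local connectedness, Zorn's lemma provides a minimal closed subset of `A`
separating `c` from `d`. It is connected, so it lies in a component of `A`.
-/

open Set Filter Topology Pointwise

/-- The set `E` separates the points `x` and `y`: both lie outside `E` and in
different connected components of the complement of `E`. -/
def SepPts {X : Type*} [TopologicalSpace X] (E : Set X) (x y : X) : Prop :=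
  x ∉ E ∧ y ∉ E ∧ connectedComponentIn Eᶜ x ≠ connectedComponentIn Eᶜ y

/-- The set `E` separates the set `Y ⊆ X \ E`: two points of `Y` lie in different
connected components of the complement of `E`. -/
def SepSet {X : Type*} [TopologicalSpace X] (E Y : Set X) : Prop :=
  Y ⊆ Eᶜ ∧ ∃ x ∈ Y, ∃ y ∈ Y, connectedComponentIn Eᶜ x ≠ connectedComponentIn Eᶜ y

/-- Two (closed) sets `A` and `B` cross: they intersect, or each separates the other. -/
def Crosses {X : Type*} [TopologicalSpace X] (A B : Set X) : Prop :=
  (A ∩ B).Nonempty ∨ (SepSet A B ∧ SepSet B A)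

/-- There is a (finite) crossing sequence in `𝓐` from `A` to `B`. -/
def CrossSeqFromTo {X : Type*} [TopologicalSpace X] (𝓐 : Set (Set X)) (A B : Set X) : Prop :=
  ∃ (n : ℕ) (c : ℕ → Set X), c 0 = A ∧ c n = B ∧ (∀ i ≤ n, c i ∈ 𝓐) ∧
    ∀ i < n, Crosses (c i) (c (i + 1))

/-- A collection `𝓐` is cross-connected: any two of its elements are joined by a
crossing sequence in `𝓐`. -/
def CrossConnected {X : Type*} [TopologicalSpace X] (𝓐 : Set (Set X)) : Prop :=
  ∀ A ∈ 𝓐, ∀ B ∈ 𝓐, CrossSeqFromTo 𝓐 A B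

/-- There is a crossing sequence `A, A_1, …, A_n, B` in `𝓐` (with `n ≥ 1`) whose
intermediate terms `A_1, …, A_n` are disjoint from `D`. -/
def CrossSeqAvoiding {X : Type*} [TopologicalSpace X] (𝓐 : Set (Set X)) (A B D : Set X) :
    Prop :=
  ∃ n : ℕ, 1 ≤ n ∧ ∃ c : ℕ → Set X, c 0 = A ∧ c (n + 1) = B ∧ (∀ i ≤ n + 1, c i ∈ 𝓐) ∧
    (∀ i ≤ n, Crosses (c i) (c (i + 1))) ∧ ∀ i, 1 ≤ i → i ≤ n → c i ∩ D = ∅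

/-- A collection of subsets of a metric space is null if for every `ε > 0` only finitely
many of its members have diameter greater than `ε`. -/
def NullFam {X : Type*} [PseudoMetricSpace X] (𝓐 : Set (Set X)) : Prop :=
  ∀ ε : ℝ, 0 < ε → {A ∈ 𝓐 | ε < Metric.diam A}.Finite

/-- A collection `𝓐` is fine if any two distinct points are separated by the union of
some finite subcollection of `𝓐`. -/
def FineFam {X : Type*} [PseudoMetricSpace X] (𝓐 : Set (Set X)) : Prop :=
  ∀ x y : X, x ≠ y → ∃ 𝓑 ⊆ 𝓐, 𝓑.Finite ∧ SepPts (⋃₀ 𝓑) x y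

/-- A sequence of maps `T i : X → X` acts as a convergence sequence on the subset `A`,
with repeller `n ∈ A` and attractor `p ∈ A`: for every compact `C ⊆ A \ {n}` and every
open neighborhood `U` of `p`, eventually `T i '' C ⊆ U`. -/
def ConvSeqOn {X : Type*} [TopologicalSpace X] (A : Set X) (T : ℕ → X → X) (n p : X) :
    Prop :=
  n ∈ A ∧ p ∈ A ∧ ∀ C : Set X, C ⊆ A → IsCompact C → n ∉ C →
    ∀ U : Set X, IsOpen U → p ∈ U → ∀ᶠ i in atTop, T i '' C ⊆ U

/-- The stabilizer of a subset `A ⊆ X` in `G`. -/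
def stab (G : Type*) {X : Type*} [Group G] [MulAction G X] (A : Set X) : Set G :=
  {g : G | g • A = A}

/-- The subset `S` of the group `G` acts as a convergence group on `A ⊆ X`: every
sequence of distinct elements of `S` has a subsequence acting as a convergence
sequence on `A`. -/
def ConvGroupOn {G X : Type*} [Group G] [MulAction G X] [TopologicalSpace X]
    (S : Set G) (A : Set X) : Prop :=
  ∀ g : ℕ → G, (∀ i, g i ∈ S) → Function.Injective g →
    ∃ k : ℕ → ℕ, StrictMono k ∧ ∃ n p : X,
      ConvSeqOn A (fun i => (g (k i) • · : X → X)) n p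

/-- `(G, 𝓐)` is a local convergence pairing on `X`. -/
structure IsLocalConvPairing (G : Type*) {X : Type*} [Group G] [MulAction G X]
    [MetricSpace X] (𝓐 : Set (Set X)) : Prop where
  closed : ∀ A ∈ 𝓐, IsClosed A
  invariant : ∀ g : G, ∀ A ∈ 𝓐, g • A ∈ 𝓐
  big : ∀ A ∈ 𝓐, 2 < A.encard
  null : NullFam 𝓐
  fine : FineFam 𝓐
  stabConv : ∀ A ∈ 𝓐, ConvGroupOn (stab G A) A
  connect : ∀ A ∈ 𝓐, ∀ B ∈ 𝓐, (A ∩ B).encard ≤ 2 →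
    (∀ c : X, A ∩ B = {c} → ∀ b ∈ B, b ≠ c → CrossSeqAvoiding 𝓐 A B {b, c}) ∧
    ((¬ ∃ c : X, A ∩ B = {c}) → CrossSeqAvoiding 𝓐 A B (A ∩ B))

section Components

variable {X : Type*} [TopologicalSpace X]

lemma closure_connectedComponentIn_inter (F : Set X) (x : X) :
    closure (connectedComponentIn F x) ∩ F = connectedComponentIn F x := by
  have hsub : connectedComponentIn F x ⊆ closure (connectedComponentIn F x) ∩ F :=
    subset_inter subset_closure (connectedComponentIn_subset F x)
  refine Subset.antisymm ?_ hsub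
  by_cases hx : x ∈ F
  · exact (isPreconnected_connectedComponentIn.subset_closure hsub inter_subset_left)
      |>.subset_connectedComponentIn (hsub (mem_connectedComponentIn hx)) inter_subset_right
  · simp [connectedComponentIn_eq_empty hx]

lemma disjoint_frontier_connectedComponentIn [LocallyConnectedSpace X] {U : Set X}
    (hU : IsOpen U) (x : X) : Disjoint (frontier (connectedComponentIn U x)) U := by
  rw [hU.connectedComponentIn.frontier_eq, disjoint_left]
  rintro z ⟨hz, hzC⟩ hzU
  exact hzC (closure_connectedComponentIn_inter U x ▸ ⟨hz, hzU⟩)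

lemma connectedComponentIn_iUnion_of_directed [LocallyConnectedSpace X] {ι : Sort*}
    {U : ι → Set X} (hU : ∀ i, IsOpen (U i)) (hdir : Directed (· ⊆ ·) U) (x : X) :
    connectedComponentIn (⋃ i, U i) x = ⋃ i, connectedComponentIn (U i) x := by
  refine Subset.antisymm ?_
    (iUnion_subset fun i => connectedComponentIn_mono x (subset_iUnion U i))
  by_cases hx : x ∈ ⋃ i, U i
  swap
  · simp [connectedComponentIn_eq_empty hx]
  obtain ⟨i₀, hi₀⟩ := mem_iUnion.1 hx
  refine isPreconnected_connectedComponentIn.subset_of_closure_inter_subset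
    (isOpen_iUnion fun i => (hU i).connectedComponentIn)
    ⟨x, mem_connectedComponentIn hx, mem_iUnion.2 ⟨i₀, mem_connectedComponentIn hi₀⟩⟩ ?_
  rintro z ⟨hz, hzU⟩
  obtain ⟨i, hi⟩ := mem_iUnion.1 (connectedComponentIn_subset _ _ hzU)
  obtain ⟨w, hwz, hwx⟩ := mem_closure_iff_nhds.1 hz _
    ((hU i).connectedComponentIn.mem_nhds (mem_connectedComponentIn hi))
  obtain ⟨j, hwx⟩ := mem_iUnion.1 hwx
  obtain ⟨k, hik, hjk⟩ := hdir i j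
  have hzw := connectedComponentIn_eq (connectedComponentIn_mono z hik hwz)
  have hxw := connectedComponentIn_eq (connectedComponentIn_mono x hjk hwx)
  refine mem_iUnion.2 ⟨k, ?_⟩
  rw [hxw, ← hzw]
  exact mem_connectedComponentIn (hik hi)

end Components

section CircleMaps

lemma exists_lift_of_nullhomotopic {X E B : Type*} [TopologicalSpace X] [TopologicalSpace E]
    [TopologicalSpace B] {p : E → B} (hp : IsCoveringMap p) (hsurj : p.Surjective)
    {f : C(X, B)} (hf : f.Nullhomotopic) : ∃ g : C(X, E), ∀ x, p (g x) = f x := by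
  obtain ⟨b, hb⟩ := hf
  obtain ⟨H⟩ := hb.symm
  obtain ⟨e, rfl⟩ := hsurj b
  have H0 : ∀ x, H.toContinuousMap (0, x) = p (ContinuousMap.const X e x) := H.apply_zero
  exact ⟨(hp.liftHomotopy H.toContinuousMap _ H0).comp (.prodMk (.const X 1) (.id X)), fun x =>
    (congr_fun (hp.liftHomotopy_lifts H.toContinuousMap _ H0) (1, x)).trans (H.apply_one x)⟩

lemma sub_eq_sub_of_circleExp_eq {X : Type*} [TopologicalSpace X] {S : Set X}
    (hS : IsPreconnected S) {f g : X → ℝ} (hf : ContinuousOn f S) (hg : ContinuousOn g S)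
    (hfg : ∀ x ∈ S, Circle.exp (f x) = Circle.exp (g x)) {x y : X} (hx : x ∈ S) (hy : y ∈ S) :
    f x - g x = f y - g y := by
  have hmaps : MapsTo (fun z => f z - g z) S (AddSubgroup.zmultiples (2 * Real.pi)) := by
    intro z hz
    obtain ⟨m, hm⟩ := Circle.exp_eq_exp.1 (hfg z hz)
    exact ⟨m, by simp [hm]⟩
  exact hS.constant_of_mapsTo (SetLike.isDiscrete_iff_discreteTopology.2 inferInstance)
    (hf.sub hg) hmaps hx hy

variable {Z : Type*} [TopologicalSpace Z] {U V : Set Z}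

lemma exists_continuousOn_sub_eq_indicator [NormalSpace Z] (hU : IsOpen U) (hV : IsOpen V)
    (hUV : U ∪ V = univ) {W : Set Z} (hW : Disjoint (frontier W) (U ∩ V)) :
    ∃ u v : Z → ℝ, ContinuousOn u U ∧ ContinuousOn v V ∧ ∀ z, u z - v z = W.indicator 1 z := by
  classical
  have hdisj : Disjoint Uᶜ Vᶜ := by
    rwa [disjoint_compl_left_iff_subset, compl_subset_iff_union, union_comm]
  obtain ⟨φ, hφU, hφV, -⟩ :=
    exists_continuous_zero_one_of_isClosed hU.isClosed_compl hV.isClosed_compl hdisj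
  have hfrontier : ∀ z ∈ frontier W, z ∈ U → z ∈ Vᶜ := fun z hz hzU hzV =>
    disjoint_left.1 hW hz ⟨hzU, hzV⟩
  refine ⟨W.indicator fun z => 1 - φ z, W.indicator fun z => -φ z, ?_, ?_, fun z => ?_⟩
  · rw [← piecewise_eq_indicator]
    refine ContinuousOn.piecewise ?_ (by fun_prop) continuousOn_const
    rintro z ⟨hzU, hz⟩
    simp [hφV (hfrontier z hz hzU)]
  · rw [← piecewise_eq_indicator]
    refine ContinuousOn.piecewise ?_ (by fun_prop) continuousOn_const
    rintro z ⟨hzV, hz⟩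
    simp [hφU fun hzU => hfrontier z hz hzU hzV]
  · by_cases hz : z ∈ W <;> simp [hz]

lemma sub_eq_sub_of_isOpen_cover (hcirc : ∀ f : C(Z, Circle), f.Nullhomotopic)
    (hU : IsOpen U) (hV : IsOpen V) (hUV : U ∪ V = univ) {u v : Z → ℝ}
    (hu : ContinuousOn u U) (hv : ContinuousOn v V)
    (huv : ∀ z, Circle.exp (u z) = Circle.exp (v z)) {c d : Z}
    (hdU : d ∈ connectedComponentIn U c) (hdV : d ∈ connectedComponentIn V c) :
    u c - v c = u d - v d := by
  have hcont : Continuous fun z => Circle.exp (u z) := by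
    rw [← continuousOn_univ, ← hUV]
    refine .union_of_isOpen (Circle.exp.continuous.comp_continuousOn hu) ?_ hU hV
    simpa only [huv] using! Circle.exp.continuous.comp_continuousOn hv
  obtain ⟨g, hg⟩ := exists_lift_of_nullhomotopic Circle.isCoveringMap_exp Circle.exp_surjective
    (hcirc ⟨_, hcont⟩)
  have hgu : g c - u c = g d - u d :=
    sub_eq_sub_of_circleExp_eq isPreconnected_connectedComponentIn g.continuous.continuousOn
      (hu.mono (connectedComponentIn_subset U c)) (fun z _ => hg z)
      (mem_connectedComponentIn (connectedComponentIn_nonempty_iff.1 ⟨d, hdU⟩)) hdU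
  have hgv : g c - v c = g d - v d :=
    sub_eq_sub_of_circleExp_eq isPreconnected_connectedComponentIn g.continuous.continuousOn
      (hv.mono (connectedComponentIn_subset V c)) (fun z _ => (hg z).trans (huv z))
      (mem_connectedComponentIn (connectedComponentIn_nonempty_iff.1 ⟨d, hdV⟩)) hdV
  linarith

theorem connectedComponentIn_inter_of_isOpen_cover [NormalSpace Z] [LocallyConnectedSpace Z]
    (hcirc : ∀ f : C(Z, Circle), f.Nullhomotopic) (hU : IsOpen U) (hV : IsOpen V)
    (hUV : U ∪ V = univ) (c : Z) :
    connectedComponentIn (U ∩ V) c = connectedComponentIn U c ∩ connectedComponentIn V c := by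
  refine Subset.antisymm (subset_inter (connectedComponentIn_mono c inter_subset_left)
    (connectedComponentIn_mono c inter_subset_right)) ?_
  rintro d ⟨hdU, hdV⟩
  have hc : c ∈ U ∩ V := ⟨connectedComponentIn_nonempty_iff.1 ⟨d, hdU⟩,
    connectedComponentIn_nonempty_iff.1 ⟨d, hdV⟩⟩
  set W := connectedComponentIn (U ∩ V) c
  obtain ⟨u, v, hu, hv, huv⟩ := exists_continuousOn_sub_eq_indicator hU hV hUV
    (disjoint_frontier_connectedComponentIn (hU.inter hV) c)
  have hexp : ∀ z, Circle.exp (2 * Real.pi * u z) = Circle.exp (2 * Real.pi * v z) := by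
    intro z
    by_cases hz : z ∈ W
    · have huvz : u z = v z + 1 := by simpa [W, hz, sub_eq_iff_eq_add'] using huv z
      exact Circle.exp_eq_exp.2 ⟨1, by rw [huvz]; push_cast; ring⟩
    · have huvz : u z = v z := by simpa [W, hz, sub_eq_zero] using huv z
      rw [huvz]
  have hsub := sub_eq_sub_of_isOpen_cover hcirc hU hV hUV (hu.const_mul _) (hv.const_mul _) hexp
    hdU hdV
  have hind : W.indicator (1 : Z → ℝ) c = W.indicator 1 d := by
    simpa only [← mul_sub, huv, mul_right_inj' Real.two_pi_pos.ne'] using hsub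
  by_contra hdW
  simp [hdW, W, mem_connectedComponentIn hc] at hind

end CircleMaps

namespace SepPts

variable {X : Type*} [TopologicalSpace X] {E F : Set X} {c d : X}

lemma iff_notMem_connectedComponentIn :
    SepPts E c d ↔ c ∉ E ∧ d ∉ E ∧ d ∉ connectedComponentIn Eᶜ c := by
  refine and_congr_right fun _ => and_congr_right fun hd => not_congr ⟨fun h => ?_, ?_⟩
  · exact h ▸ mem_connectedComponentIn hd
  · exact connectedComponentIn_eq

lemma mono (h : SepPts E c d) (hEF : E ⊆ F) (hc : c ∉ F) (hd : d ∉ F) : SepPts F c d := by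
  rw [iff_notMem_connectedComponentIn] at h ⊢
  exact ⟨hc, hd, fun hmem =>
    h.2.2 (connectedComponentIn_mono c (compl_subset_compl.2 hEF) hmem)⟩

lemma nonempty [PreconnectedSpace X] (h : SepPts E c d) : E.Nonempty := by
  rw [nonempty_iff_ne_empty]
  rintro rfl
  simp only [SepPts, compl_empty, connectedComponentIn_univ,
    PreconnectedSpace.connectedComponent_eq_univ, ne_eq, not_true_eq_false, and_false] at h

lemma iInter [LocallyConnectedSpace X] {ι : Sort*} [Nonempty ι] {E : ι → Set X}
    (hE : ∀ i, IsClosed (E i)) (hdir : Directed (· ⊇ ·) E) (hsep : ∀ i, SepPts (E i) c d) :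
    SepPts (⋂ i, E i) c d := by
  simp only [iff_notMem_connectedComponentIn] at hsep ⊢
  have hdir' : Directed (· ⊆ ·) fun i => (E i)ᶜ :=
    hdir.mono_comp (g := compl) _ fun _ _ => compl_subset_compl.2
  rw [compl_iInter, connectedComponentIn_iUnion_of_directed (fun i => (hE i).isOpen_compl) hdir']
  obtain ⟨i⟩ := ‹Nonempty ι›
  exact ⟨fun h => (hsep i).1 (mem_iInter.1 h i), fun h => (hsep i).2.1 (mem_iInter.1 h i),
    by simpa using fun j => (hsep j).2.2⟩

lemma of_union [NormalSpace X] [LocallyConnectedSpace X]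
    (hcirc : ∀ f : C(X, Circle), f.Nullhomotopic) (hE : IsClosed E) (hF : IsClosed F)
    (hEF : Disjoint E F) (h : SepPts (E ∪ F) c d) : SepPts E c d ∨ SepPts F c d := by
  have hcover : Eᶜ ∪ Fᶜ = univ := by rw [← compl_inter, hEF.inter_eq, compl_empty]
  simp only [iff_notMem_connectedComponentIn, compl_union, mem_union, not_or,
    connectedComponentIn_inter_of_isOpen_cover hcirc hE.isOpen_compl hF.isOpen_compl hcover,
    mem_inter_iff] at h ⊢
  tauto

lemma exists_minimal_isClosed [LocallyConnectedSpace X] (hE : IsClosed E) (h : SepPts E c d) :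
    ∃ B ⊆ E, Minimal (fun B => IsClosed B ∧ SepPts B c d) B := by
  refine zorn_superset_nonempty {B | IsClosed B ∧ SepPts B c d} ?_ E ⟨hE, h⟩
  intro 𝒞 h𝒞 hchain hne
  have : Nonempty 𝒞 := hne.to_subtype
  refine ⟨⋂₀ 𝒞, ⟨isClosed_sInter fun B hB => (h𝒞 hB).1, ?_⟩, fun B => sInter_subset_of_mem⟩
  have hdir : Directed (· ⊇ ·) (Subtype.val : 𝒞 → Set X)  := fun B₁ B₂ =>
    (hchain.total B₁.2 B₂.2).elim (fun h => ⟨B₁, Subset.rfl, h⟩) fun h => ⟨B₂, h, Subset.rfl⟩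
  rw [sInter_eq_iInter]
  exact iInter (fun B => (h𝒞 B.2).1) hdir fun B => (h𝒞 B.2).2

lemma isPreconnected_of_minimal [NormalSpace X] [LocallyConnectedSpace X]
    (hcirc : ∀ f : C(X, Circle), f.Nullhomotopic)
    (hmin : Minimal (fun B => IsClosed B ∧ SepPts B c d) E) : IsPreconnected E := by
  obtain ⟨hE, hsep⟩ := hmin.prop
  rw [isPreconnected_iff_subset_of_fully_disjoint_closed hE]
  intro F G hF hG hcover hFG
  have hunion : SepPts (E ∩ F ∪ E ∩ G) c d := by
    rwa [← inter_union_distrib_left, inter_eq_left.2 hcover]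
  refine (hunion.of_union hcirc (hE.inter hF) (hE.inter hG)
    (hFG.mono inter_subset_right inter_subset_right)).imp (fun h => ?_) fun h => ?_
  · exact inter_eq_left.1 (hmin.eq_of_subset ⟨hE.inter hF, h⟩ inter_subset_left)
  · exact inter_eq_left.1 (hmin.eq_of_subset ⟨hE.inter hG, h⟩ inter_subset_left)

end SepPts

theorem separated_by_component_general {Z : Type*} [TopologicalSpace Z] [NormalSpace Z]
    [PreconnectedSpace Z] [LocallyConnectedSpace Z]
    (hcirc : ∀ f : C(Z, Circle), f.Nullhomotopic) {A : Set Z} (hA : IsClosed A) {c d : Z}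
    (hsep : SepPts A c d) : ∃ x ∈ A, SepPts (connectedComponentIn A x) c d := by
  obtain ⟨B, hBA, hmin⟩ := hsep.exists_minimal_isClosed hA
  have hBsep : SepPts B c d := hmin.prop.2
  obtain ⟨x, hx⟩ := hBsep.nonempty
  have hBcomp : B ⊆ connectedComponentIn A x :=
    (SepPts.isPreconnected_of_minimal hcirc hmin).subset_connectedComponentIn hx hBA
  have hcompA : connectedComponentIn A x ⊆ A := connectedComponentIn_subset A x
  exact ⟨x, hBA hx, hBsep.mono hBcomp (fun h => hsep.1 (hcompA h)) fun h => hsep.2.1 (hcompA h)⟩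

/-- Corollary: in a Peano continuum admitting no essential map to the circle, if a
closed set `A` separates `c` from `d`, then some connected component of `A` separates
`c` from `d`. -/
theorem separated_by_component {Z : Type*} [MetricSpace Z] [CompactSpace Z]
    [ConnectedSpace Z] [LocallyConnectedSpace Z]
    (hcirc : ∀ f : C(Z, Circle), f.Nullhomotopic)
    (A : Set Z) (hA : IsClosed A) (c d : Z) (hc : c ∉ A) (hd : d ∉ A)
    (hsep : connectedComponentIn Aᶜ c ≠ connectedComponentIn Aᶜ d) :
    ∃ x ∈ A, SepPts (connectedComponentIn A x) c d :=
  separated_by_component_general hcirc hA ⟨hc, hd, hsep⟩
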